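/- Suppose the agent state {Z_t} of a POMDP is an information state, i.e., there exist r_IS : Z × A → ℝ and a transition kernel P_IS : Z × A → Δ(Z) such that E[R_t | H_t, A_t] = r_IS(σ_t(H_t), A_t) and P(Z_{t+1} | H_t, A_t) = P_IS(Z_{t+1} | σ_t(H_t), A_t) for all t. Let (Q*_IS, V*_IS) solve the Bellman equations Q*_IS(z,a) = r_IS(z,a) + γ ∑_{z'} P_IS(z'|z,a)·V*_IS(z'), V*_IS(z) = max_a Q*_IS(z,a). Then the history-dependent policy π*_t(h_t) = argmax_a Q*_IS(σ_t(h_t), a) achieves the supremum of expected discounted reward over all history-dependent policies. -/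

import Mathlib

open scoped BigOperators

section

variable {S A Y Z : Type*} [Fintype S] [Fintype A] [Fintype Y] [Fintype Z]

/-- Probability of a trajectory `(S_t,Y_t,A_t), …, (S_1,Y_1,A_1)` (listed most-recent
first) of a POMDP with initial law `ν` of `(S₁,Y₁)`, dynamics `P(s',y'|s,a)`, and a
history-dependent stochastic policy `π(a | past (y,a)-pairs, current y)`. -/
noncomputable def probTraj (ν : S × Y → ℝ) (P : S → A → S × Y → ℝ)
    (π : List (Y × A) → Y → A → ℝ) : List (S × Y × A) → ℝ
  | [] => 1
  | (s, y, a) :: rest =>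
      (match rest with
        | [] => ν (s, y)
        | (s₀, _, a₀) :: _ => P s₀ a₀ (s, y)) *
        π (rest.map fun u => (u.2.1, u.2.2)) y a * probTraj ν P π rest

/-- A valid (history-dependent) stochastic policy. -/
def validPol (π : List (Y × A) → Y → A → ℝ) : Prop :=
  ∀ h y, (∀ a, 0 ≤ π h y a) ∧ ∑ a, π h y a = 1

/-- Expected reward at time `t+1` (trajectories are indexed chronologically by `Fin (t+1)`
and reversed into the most-recent-first convention). -/
noncomputable def expRtime (ν : S × Y → ℝ) (P : S → A → S × Y → ℝ) (r : S → A → ℝ)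
    (π : List (Y × A) → Y → A → ℝ) (t : ℕ) : ℝ :=
  ∑ v : Fin (t + 1) → S × Y × A,
    probTraj ν P π (List.ofFn v).reverse * r (v (Fin.last t)).1 (v (Fin.last t)).2.2

/-- Performance `J^π = E^π[∑_{t≥1} γ^{t−1} R_t]` of a history-dependent policy. -/
noncomputable def valJ (γ : ℝ) (ν : S × Y → ℝ) (P : S → A → S × Y → ℝ)
    (r : S → A → ℝ) (π : List (Y × A) → Y → A → ℝ) : ℝ :=
  ∑' t : ℕ, γ ^ t * expRtime ν P r π t

/-- The agent state `Z_t = σ_t(H_t)` generated by the recursive update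
`Z₁ = φ₀(Y₁)`, `Z_{t+1} = φ(Z_t, Y_{t+1}, A_t)`; the history is given as the list of
past `(y,a)` pairs (most recent first) together with the current observation. -/
def sigAgg (φ0 : Y → Z) (φ : Z → Y → A → Z) : List (Y × A) → Y → Z
  | [], y => φ0 y
  | (y', a') :: rest, y => φ (sigAgg φ0 φ rest y') y a'

/-- The full trajectory obtained by attaching a state sequence to an observation-action
history (most recent first). -/
def zipSV (w : List (Y × A)) (sv : Fin w.length → S) : List (S × Y × A) :=
  List.ofFn fun i => (sv i, (w.get i).1, (w.get i).2)

/-- Probability of observing the observation-action history `w` (most recent first). -/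
noncomputable def histProb (ν : S × Y → ℝ) (P : S → A → S × Y → ℝ)
    (π : List (Y × A) → Y → A → ℝ) (w : List (Y × A)) : ℝ :=
  ∑ sv : Fin w.length → S, probTraj ν P π (zipSV w sv)

end

/-!
An information state makes the agent-state value function a potential for the original problem.
By (P1) and (P2), under every policy the expected reward at time `t` plus `γ` times the expected
value of `VIS` at the next agent state equals the expectation of `QIS` at the current agent state
and action. This is at most the expected value of `VIS` at the current agent state, with equality
if the policy only takes greedy actions. Discounting and telescoping bounds the performance of
every policy by the expectation of `VIS` at the initial agent state, which does not depend on the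
policy and which the greedy policy attains.
-/

section Telescoping

variable {G : Type*} [AddCommGroup G] [TopologicalSpace G] [IsTopologicalAddGroup G] {a b : ℕ → G}

theorem tsum_eq_of_add_succ_eq [T2Space G] (ha : Summable a)
    (hb : Filter.Tendsto b Filter.atTop (nhds 0)) (h : ∀ n, a n + b (n + 1) = b n) :
    ∑' n, a n = b 0 := by
  refine tendsto_nhds_unique ha.hasSum.tendsto_sum_nat ?_
  simpa only [eq_sub_of_add_eq (h _), Finset.sum_range_sub', sub_zero] using hb.const_sub (b 0)

theorem tsum_le_of_add_succ_le [PartialOrder G] [IsOrderedAddMonoid G] [OrderClosedTopology G]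
    (ha : Summable a) (hb : Filter.Tendsto b Filter.atTop (nhds 0))
    (h : ∀ n, a n + b (n + 1) ≤ b n) : ∑' n, a n ≤ b 0 := by
  refine le_of_tendsto_of_tendsto' ha.hasSum.tendsto_sum_nat
    (by simpa only [sub_zero] using hb.const_sub (b 0)) fun n => ?_
  calc ∑ i ∈ Finset.range n, a i
      ≤ ∑ i ∈ Finset.range n, (b i - b (i + 1)) :=
        Finset.sum_le_sum fun i _ => le_sub_iff_add_le.2 (h i)
    _ = b 0 - b n := Finset.sum_range_sub' b n

theorem summable_pow_mul_of_norm_le {𝕜 : Type*} [NormedField 𝕜] [CompleteSpace 𝕜] {γ : 𝕜}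
    {R : ℕ → 𝕜} {C : ℝ} (hγ : ‖γ‖ < 1) (hR : ∀ n, ‖R n‖ ≤ C) : Summable fun n => γ ^ n * R n :=
  .of_norm_bounded ((summable_geometric_of_lt_one (norm_nonneg γ) hγ).mul_right C) fun n => by
    rw [norm_mul, norm_pow]
    gcongr
    exact hR n

end Telescoping

section FiniteSums

variable {X M : Type*} [Fintype X] [AddCommMonoid M]

theorem sum_fin_succ_cons (n : ℕ) (F : (Fin (n + 1) → X) → M) :
    ∑ v, F v = ∑ x, ∑ v : Fin n → X, F (Fin.cons x v) := by
  rw [← Fintype.sum_prod_type']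
  exact ((Fin.consEquiv fun _ => X).sum_comp F).symm

theorem sum_fin_succ_snoc (n : ℕ) (F : (Fin (n + 1) → X) → M) :
    ∑ v, F v = ∑ v : Fin n → X, ∑ x, F (Fin.snoc v x) := by
  rw [Finset.sum_comm, ← Fintype.sum_prod_type']
  exact ((Fin.snocEquiv fun _ => X).sum_comp F).symm

theorem reverse_ofFn_snoc {X : Type*} {n : ℕ} (v : Fin n → X) (x : X) :
    (List.ofFn (Fin.snoc v x : Fin (n + 1) → X)).reverse = x :: (List.ofFn v).reverse := by
  rw [List.ofFn_succ']
  simp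

theorem sum_prod_sum_rotate {α β δ : Type*} [Fintype α] [Fintype β] [Fintype δ]
    (F : β × δ → α → M) : ∑ u, ∑ s, F u s = ∑ x : α × β, ∑ a, F (x.2, a) x.1 := by
  simp only [Fintype.sum_prod_type]
  exact (Finset.sum_congr rfl fun _ _ => Finset.sum_comm).trans Finset.sum_comm

/-- The sum of `F` over all lists of length `n`. They are enumerated as reversals of chronological
sequences, which is how `expRtime` enumerates trajectories. -/
def listSum (n : ℕ) (F : List X → M) : M :=
  ∑ v : Fin n → X, F (List.ofFn v).reverse

theorem listSum_zero (F : List X → M) : listSum 0 F = F [] := by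
  simp [listSum]

theorem listSum_succ (n : ℕ) (F : List X → M) :
    listSum (n + 1) F = listSum n fun l => ∑ x, F (x :: l) := by
  simp only [listSum, sum_fin_succ_snoc, reverse_ofFn_snoc]

end FiniteSums

theorem validPol_deterministic {A Y : Type*} [Fintype A] [DecidableEq A]
    (d : List (Y × A) → Y → A) :
    validPol fun past y a => if a = d past y then 1 else 0 :=
  fun _ _ => ⟨fun _ => by positivity, by simp⟩

section JointLaw

variable {S A Y : Type*} [Fintype S]

/-- The joint probability of the observation-action history `u :: past` and the hidden state `s` at
the time of its latest pair `u`, computed by the forward filtering recursion. As a function of `s`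
it is the unnormalized belief state. -/
def jointProb (ν : S × Y → ℝ) (P : S → A → S × Y → ℝ) (π : List (Y × A) → Y → A → ℝ) :
    List (Y × A) → Y × A → S → ℝ
  | [], u, s => ν (s, u.1) * π [] u.1 u.2
  | u₀ :: past, u, s =>
      (∑ s₀, jointProb ν P π past u₀ s₀ * P s₀ u₀.2 (s, u.1)) * π (u₀ :: past) u.1 u.2

variable (ν : S × Y → ℝ) (P : S → A → S × Y → ℝ) (π : List (Y × A) → Y → A → ℝ)

theorem zipSV_cons {S : Type*} (u : Y × A) (past : List (Y × A)) (s : S)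
    (sv : Fin past.length → S) :
    zipSV (u :: past) (Fin.cons s sv : Fin (past.length + 1) → S) = (s, u) :: zipSV past sv := by
  simp [zipSV, List.ofFn_succ]

theorem map_snd_zipSV {S : Type*} (w : List (Y × A)) (sv : Fin w.length → S) :
    (zipSV w sv).map Prod.snd = w := by
  simp only [zipSV, List.map_ofFn]
  exact List.ofFn_get w

theorem probTraj_cons_cons {S : Type*} (ν : S × Y → ℝ) (P : S → A → S × Y → ℝ)
    (x x₀ : S × Y × A) (l : List (S × Y × A)) :
    probTraj ν P π (x :: x₀ :: l) =
      P x₀.1 x₀.2.2 (x.1, x.2.1) * π (x₀.2 :: l.map Prod.snd) x.2.1 x.2.2 *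
        probTraj ν P π (x₀ :: l) :=
  rfl

theorem sum_probTraj_cons_zipSV (past : List (Y × A)) (u : Y × A) (s : S) :
    ∑ sv : Fin past.length → S, probTraj ν P π ((s, u) :: zipSV past sv) =
      jointProb ν P π past u s := by
  induction past generalizing u s with
  | nil => simp [zipSV, probTraj, jointProb]
  | cons u₀ past ih =>
    refine (sum_fin_succ_cons _ fun sv =>
      probTraj ν P π ((s, u) :: zipSV (u₀ :: past) sv)).trans ?_
    simp only [zipSV_cons, probTraj_cons_cons, map_snd_zipSV, ← Finset.mul_sum, ih, jointProb,
      Finset.sum_mul]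
    exact Finset.sum_congr rfl fun s₀ _ => by ring

theorem sum_probTraj_zipSV_mul (past : List (Y × A)) (u : Y × A) (G : S → ℝ) :
    ∑ sv : Fin (u :: past).length → S,
        probTraj ν P π (zipSV (u :: past) sv) * G (sv ⟨0, by simp⟩) =
      ∑ s, jointProb ν P π past u s * G s := by
  simp only [← sum_probTraj_cons_zipSV, Finset.sum_mul]
  refine (sum_fin_succ_cons past.length fun sv =>
    probTraj ν P π (zipSV (u :: past) sv) * G (sv 0)).trans ?_
  simp only [zipSV_cons, Fin.cons_zero]

theorem histProb_cons (past : List (Y × A)) (u : Y × A) :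
    histProb ν P π (u :: past) = ∑ s, jointProb ν P π past u s := by
  simpa only [histProb, mul_one] using sum_probTraj_zipSV_mul ν P π past u fun _ => 1

variable {ν P π}

theorem jointProb_eq_zero {past : List (Y × A)} {u : Y × A} (h : π past u.1 u.2 = 0) (s : S) :
    jointProb ν P π past u s = 0 := by
  cases past <;> simp [jointProb, h]

variable [Fintype A] [Fintype Y]

theorem jointProb_nonneg (hν : ν ∈ stdSimplex ℝ (S × Y))
    (hP : ∀ s a, P s a ∈ stdSimplex ℝ (S × Y)) (hπ : validPol π)
    (past : List (Y × A)) (u : Y × A) (s : S) : 0 ≤ jointProb ν P π past u s := by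
  induction past generalizing u s with
  | nil => exact mul_nonneg (hν.1 _) ((hπ _ _).1 _)
  | cons u₀ past ih =>
    exact mul_nonneg (Finset.sum_nonneg fun s₀ _ => mul_nonneg (ih u₀ s₀) ((hP _ _).1 _))
      ((hπ _ _).1 _)

theorem sum_jointProb_mul_eq_of_div_eq (hν : ν ∈ stdSimplex ℝ (S × Y))
    (hP : ∀ s a, P s a ∈ stdSimplex ℝ (S × Y)) (hπ : validPol π) {past : List (Y × A)} {u : Y × A}
    {G : S → ℝ} {c : ℝ}
    (h : 0 < histProb ν P π (u :: past) →
      (∑ sv : Fin (u :: past).length → S,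
        probTraj ν P π (zipSV (u :: past) sv) * G (sv ⟨0, by simp⟩)) /
          histProb ν P π (u :: past) = c) :
    ∑ s, jointProb ν P π past u s * G s = (∑ s, jointProb ν P π past u s) * c := by
  have hnonneg := jointProb_nonneg hν hP hπ past u
  rw [sum_probTraj_zipSV_mul, histProb_cons] at h
  rcases (Finset.sum_nonneg fun s _ => hnonneg s).eq_or_lt with hzero | hpos
  · have hnull (s : S) : jointProb ν P π past u s = 0 :=
      (Finset.sum_eq_zero_iff_of_nonneg fun s _ => hnonneg s).1 hzero.symm s (Finset.mem_univ s)
    simp only [hnull, zero_mul, Finset.sum_const_zero]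
  · rw [mul_comm, ← div_eq_iff hpos.ne', h hpos]

end JointLaw

section StageExpectation

variable {S A Y : Type*} [Fintype S] [Fintype A] [Fintype Y]

/-- The expectation, at time `t + 1`, of a function `f` of the past observation-action pairs, the
current observation-action pair and the current hidden state. -/
def stageExp (ν : S × Y → ℝ) (P : S → A → S × Y → ℝ) (π : List (Y × A) → Y → A → ℝ) (t : ℕ)
    (f : List (Y × A) → Y × A → S → ℝ) : ℝ :=
  listSum t fun past => ∑ u, ∑ s, jointProb ν P π past u s * f past u s

section

variable (ν : S × Y → ℝ) (P : S → A → S × Y → ℝ) (π : List (Y × A) → Y → A → ℝ)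

theorem stageExp_zero (f : List (Y × A) → Y × A → S → ℝ) :
    stageExp ν P π 0 f = ∑ x, ν x * ∑ a, π [] x.2 a * f [] (x.2, a) x.1 := by
  rw [stageExp, listSum_zero, sum_prod_sum_rotate]
  simp only [jointProb, Finset.mul_sum, mul_assoc]

theorem stageExp_succ (t : ℕ) (f : List (Y × A) → Y × A → S → ℝ) :
    stageExp ν P π (t + 1) f = stageExp ν P π t fun past u s =>
      ∑ x, P s u.2 x * ∑ a, π (u :: past) x.2 a * f (u :: past) (x.2, a) x.1 := by
  simp only [stageExp, listSum_succ]
  congr! 4 with past u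
  calc ∑ u', ∑ s', jointProb ν P π (u :: past) u' s' * f (u :: past) u' s'
      = ∑ x, ∑ a, ∑ s, jointProb ν P π past u s *
          (P s u.2 x * (π (u :: past) x.2 a * f (u :: past) (x.2, a) x.1)) := by
        rw [sum_prod_sum_rotate]
        simp only [jointProb, Finset.sum_mul, mul_assoc]
    _ = ∑ x, ∑ s, ∑ a, jointProb ν P π past u s *
          (P s u.2 x * (π (u :: past) x.2 a * f (u :: past) (x.2, a) x.1)) :=
        Finset.sum_congr rfl fun _ _ => Finset.sum_comm
    _ = ∑ s, jointProb ν P π past u s *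
          ∑ x, P s u.2 x * ∑ a, π (u :: past) x.2 a * f (u :: past) (x.2, a) x.1 := by
        rw [Finset.sum_comm]
        simp only [Finset.mul_sum]

theorem listSum_probTraj (t : ℕ) (f : List (Y × A) → Y × A → S → ℝ) :
    (listSum t fun l => ∑ x, probTraj ν P π (x :: l) * f (l.map Prod.snd) x.2 x.1) =
      stageExp ν P π t f := by
  induction t generalizing f with
  | zero =>
    simp only [stageExp, listSum_zero, Fintype.sum_prod_type_right (α₁ := S)]
    simp [probTraj, jointProb]
  | succ t ih =>
    rw [listSum_succ, stageExp_succ, ← ih]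
    congr! 4 with l x
    simp only [Fintype.sum_prod_type, Finset.mul_sum, probTraj_cons_cons, List.map_cons]
    exact Finset.sum_congr rfl fun s' _ => Finset.sum_congr rfl fun y' _ =>
      Finset.sum_congr rfl fun a' _ => by ring

theorem expRtime_eq_stageExp (r : S → A → ℝ) (t : ℕ) :
    expRtime ν P r π t = stageExp ν P π t fun _ u s => r s u.2 := by
  rw [← listSum_probTraj, expRtime, sum_fin_succ_snoc]
  simp only [reverse_ofFn_snoc, Fin.snoc_last]
  rfl

theorem stageExp_add_mul (t : ℕ) (f g : List (Y × A) → Y × A → S → ℝ) (c : ℝ) :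
    stageExp ν P π t (fun past u s => f past u s + c * g past u s) =
      stageExp ν P π t f + c * stageExp ν P π t g := by
  simp only [stageExp, listSum, mul_add, Finset.sum_add_distrib, Finset.mul_sum, mul_left_comm c]

end

variable {ν : S × Y → ℝ} {P : S → A → S × Y → ℝ} {π : List (Y × A) → Y → A → ℝ}

theorem stageExp_congr {f g : List (Y × A) → Y × A → S → ℝ}
    (h : ∀ past u, ∑ s, jointProb ν P π past u s * f past u s =
      ∑ s, jointProb ν P π past u s * g past u s) (t : ℕ) :
    stageExp ν P π t f = stageExp ν P π t g := by
  simp only [stageExp, h]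

theorem stageExp_congr_of_policy_ne_zero {f g : List (Y × A) → Y × A → S → ℝ}
    (h : ∀ past u, π past u.1 u.2 ≠ 0 → f past u = g past u) (t : ℕ) :
    stageExp ν P π t f = stageExp ν P π t g := by
  refine stageExp_congr (fun past u => ?_) t
  by_cases hu : π past u.1 u.2 = 0
  · simp only [jointProb_eq_zero hu, zero_mul]
  · rw [h past u hu]

theorem stageExp_mono (hν : ν ∈ stdSimplex ℝ (S × Y)) (hP : ∀ s a, P s a ∈ stdSimplex ℝ (S × Y))
    (hπ : validPol π) {f g : List (Y × A) → Y × A → S → ℝ}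
    (h : ∀ past u s, f past u s ≤ g past u s) (t : ℕ) :
    stageExp ν P π t f ≤ stageExp ν P π t g :=
  Finset.sum_le_sum fun _ _ => Finset.sum_le_sum fun u _ => Finset.sum_le_sum fun s _ =>
    mul_le_mul_of_nonneg_left (h _ u s) (jointProb_nonneg hν hP hπ _ u s)

theorem stageExp_zero_of_obs (hπ : validPol π) (f : List (Y × A) → Y → ℝ) :
    stageExp ν P π 0 (fun past u _ => f past u.1) = ∑ x, ν x * f [] x.2 := by
  simp only [stageExp_zero, ← Finset.sum_mul, (hπ _ _).2, one_mul]

theorem stageExp_succ_of_obs (hπ : validPol π) (t : ℕ) (f : List (Y × A) → Y → ℝ) :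
    stageExp ν P π (t + 1) (fun past u _ => f past u.1) =
      stageExp ν P π t fun past u s => ∑ x, P s u.2 x * f (u :: past) x.2 := by
  simp only [stageExp_succ, ← Finset.sum_mul, (hπ _ _).2, one_mul]

theorem stageExp_const (hν : ν ∈ stdSimplex ℝ (S × Y)) (hP : ∀ s a, P s a ∈ stdSimplex ℝ (S × Y))
    (hπ : validPol π) (t : ℕ) (c : ℝ) : stageExp ν P π t (fun _ _ _ => c) = c := by
  induction t with
  | zero => rw [stageExp_zero_of_obs hπ fun _ _ => c, ← Finset.sum_mul, hν.2, one_mul]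
  | succ t ih =>
    rw [stageExp_succ_of_obs hπ t fun _ _ => c]
    simpa only [← Finset.sum_mul, (hP _ _).2, one_mul] using ih

theorem abs_stageExp_le (hν : ν ∈ stdSimplex ℝ (S × Y))
    (hP : ∀ s a, P s a ∈ stdSimplex ℝ (S × Y)) (hπ : validPol π)
    {f : List (Y × A) → Y × A → S → ℝ} {C : ℝ} (hf : ∀ past u s, |f past u s| ≤ C) (t : ℕ) :
    |stageExp ν P π t f| ≤ C := by
  refine abs_le.2 ⟨?_, ?_⟩
  · simpa only [stageExp_const hν hP hπ] using
      stageExp_mono hν hP hπ (fun past u s => (abs_le.1 (hf past u s)).1) t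
  · simpa only [stageExp_const hν hP hπ] using
      stageExp_mono hν hP hπ (fun past u s => (abs_le.1 (hf past u s)).2) t

theorem summable_pow_mul_stageExp_comp {ι : Type*} [Finite ι] {γ : ℝ} (hγ : |γ| < 1)
    (hν : ν ∈ stdSimplex ℝ (S × Y)) (hP : ∀ s a, P s a ∈ stdSimplex ℝ (S × Y)) (hπ : validPol π)
    (V : ι → ℝ) (ζ : List (Y × A) → Y × A → S → ι) :
    Summable fun t => γ ^ t * stageExp ν P π t fun past u s => V (ζ past u s) := by
  obtain ⟨C, hC⟩ := Finite.exists_le fun i => |V i|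
  exact summable_pow_mul_of_norm_le hγ
    (abs_stageExp_le hν hP hπ fun past u s => hC (ζ past u s))

theorem summable_pow_mul_expRtime {γ : ℝ} (hγ : |γ| < 1)
    (hν : ν ∈ stdSimplex ℝ (S × Y)) (hP : ∀ s a, P s a ∈ stdSimplex ℝ (S × Y)) (hπ : validPol π)
    (r : S → A → ℝ) : Summable fun t => γ ^ t * expRtime ν P r π t := by
  simp only [expRtime_eq_stageExp]
  exact summable_pow_mul_stageExp_comp hγ hν hP hπ r.uncurry fun _ u s => (s, u.2)

end StageExpectation

section InformationState

variable {S A Y Z : Type*} [Fintype S] [Fintype Y] [DecidableEq Z]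

/-- The compression `σ` of histories is an information state under the policy `π`, with reward model
`rIS` and transition model `PIS`. The two conditional laws are multiplied by the probability of the
history, so that histories of probability zero are unconstrained. -/
structure IsInformationState (ν : S × Y → ℝ) (P : S → A → S × Y → ℝ) (r : S → A → ℝ)
    (σ : List (Y × A) → Y → Z) (rIS : Z → A → ℝ) (PIS : Z → A → Z → ℝ)
    (π : List (Y × A) → Y → A → ℝ) : Prop where
  reward : ∀ past u, ∑ s, jointProb ν P π past u s * r s u.2 =
    (∑ s, jointProb ν P π past u s) * rIS (σ past u.1) u.2
  transition : ∀ past u z', ∑ s, jointProb ν P π past u s *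
      ∑ x, P s u.2 x * (if z' = σ (u :: past) x.2 then 1 else 0) =
    (∑ s, jointProb ν P π past u s) * PIS (σ past u.1) u.2 z'

variable {γ : ℝ} {ν : S × Y → ℝ} {P : S → A → S × Y → ℝ} {r : S → A → ℝ}
  {σ : List (Y × A) → Y → Z} {rIS : Z → A → ℝ} {PIS : Z → A → Z → ℝ}
  {π : List (Y × A) → Y → A → ℝ} {QIS : Z → A → ℝ} {VIS : Z → ℝ}

namespace IsInformationState

theorem transition_sum [Fintype Z] (h : IsInformationState ν P r σ rIS PIS π) (V : Z → ℝ)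
    (past : List (Y × A)) (u : Y × A) :
    ∑ s, jointProb ν P π past u s * ∑ x, P s u.2 x * V (σ (u :: past) x.2) =
      ∑ s, jointProb ν P π past u s * ∑ z', PIS (σ past u.1) u.2 z' * V z' := by
  have hV (z : Z) : V z = ∑ z', (if z' = z then 1 else 0) * V z' := by simp
  calc ∑ s, jointProb ν P π past u s * ∑ x, P s u.2 x * V (σ (u :: past) x.2)
      = ∑ s, ∑ z', jointProb ν P π past u s *
          (∑ x, P s u.2 x * if z' = σ (u :: past) x.2 then 1 else 0) * V z' := by
        refine Finset.sum_congr rfl fun s _ => ?_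
        simp only [hV (σ (u :: past) _), Finset.mul_sum, Finset.sum_mul, mul_assoc]
        exact Finset.sum_comm
    _ = ∑ z', (∑ s, jointProb ν P π past u s) * PIS (σ past u.1) u.2 z' * V z' := by
        rw [Finset.sum_comm]
        simp only [← Finset.sum_mul, h.transition]
    _ = ∑ s, jointProb ν P π past u s * ∑ z', PIS (σ past u.1) u.2 z' * V z' := by
        simp only [mul_assoc, ← Finset.mul_sum, ← Finset.sum_mul]

variable [Fintype A]

theorem of_condExp (hν : ν ∈ stdSimplex ℝ (S × Y)) (hP : ∀ s a, P s a ∈ stdSimplex ℝ (S × Y))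
    (hπ : validPol π)
    (hreward : ∀ (y : Y) (a : A) (past : List (Y × A)), 0 < histProb ν P π ((y, a) :: past) →
      (∑ sv : Fin ((y, a) :: past).length → S,
          probTraj ν P π (zipSV ((y, a) :: past) sv) * r (sv ⟨0, by simp⟩) a) /
        histProb ν P π ((y, a) :: past) = rIS (σ past y) a)
    (htransition : ∀ (y : Y) (a : A) (past : List (Y × A)) (z' : Z),
      0 < histProb ν P π ((y, a) :: past) →
      (∑ sv : Fin ((y, a) :: past).length → S, ∑ x : S × Y,
          probTraj ν P π (zipSV ((y, a) :: past) sv) * P (sv ⟨0, by simp⟩) a x *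
            (if z' = σ ((y, a) :: past) x.2 then 1 else 0)) /
        histProb ν P π ((y, a) :: past) = PIS (σ past y) a z') :
    IsInformationState ν P r σ rIS PIS π where
  reward past u := sum_jointProb_mul_eq_of_div_eq hν hP hπ (G := fun s => r s u.2)
    (hreward u.1 u.2 past)
  transition past u z' := by
    refine sum_jointProb_mul_eq_of_div_eq hν hP hπ
      (G := fun s => ∑ x, P s u.2 x * if z' = σ (u :: past) x.2 then 1 else 0) fun hpos => ?_
    simpa only [Finset.mul_sum, mul_assoc] using htransition u.1 u.2 past z' hpos

theorem expRtime_eq (h : IsInformationState ν P r σ rIS PIS π) (t : ℕ) :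
    expRtime ν P r π t = stageExp ν P π t fun past u _ => rIS (σ past u.1) u.2 := by
  rw [expRtime_eq_stageExp]
  exact stageExp_congr (fun past u => by rw [h.reward, Finset.sum_mul]) t

variable [Fintype Z]

theorem stageExp_succ_value (h : IsInformationState ν P r σ rIS PIS π) (hπ : validPol π)
    (V : Z → ℝ) (t : ℕ) :
    stageExp ν P π (t + 1) (fun past u _ => V (σ past u.1)) =
      stageExp ν P π t fun past u _ => ∑ z', PIS (σ past u.1) u.2 z' * V z' := by
  rw [stageExp_succ_of_obs hπ t fun past y => V (σ past y)]
  exact stageExp_congr (h.transition_sum V) t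

theorem expRtime_add_value (h : IsInformationState ν P r σ rIS PIS π) (hπ : validPol π)
    (hQ : ∀ z a, QIS z a = rIS z a + γ * ∑ z', PIS z a z' * VIS z') (t : ℕ) :
    expRtime ν P r π t + γ * stageExp ν P π (t + 1) (fun past u _ => VIS (σ past u.1)) =
      stageExp ν P π t fun past u _ => QIS (σ past u.1) u.2 := by
  simp only [h.expRtime_eq, h.stageExp_succ_value hπ, hQ, stageExp_add_mul]

theorem discounted_expRtime_add_value (h : IsInformationState ν P r σ rIS PIS π) (hπ : validPol π)
    (hQ : ∀ z a, QIS z a = rIS z a + γ * ∑ z', PIS z a z' * VIS z') (t : ℕ) :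
    γ ^ t * expRtime ν P r π t +
        γ ^ (t + 1) * stageExp ν P π (t + 1) (fun past u _ => VIS (σ past u.1)) =
      γ ^ t * stageExp ν P π t fun past u _ => QIS (σ past u.1) u.2 := by
  rw [← h.expRtime_add_value hπ hQ, pow_succ]
  ring

theorem valJ_le_initial_value (h : IsInformationState ν P r σ rIS PIS π) (hγ0 : 0 ≤ γ) (hγ1 : γ < 1)
    (hν : ν ∈ stdSimplex ℝ (S × Y)) (hP : ∀ s a, P s a ∈ stdSimplex ℝ (S × Y)) (hπ : validPol π)
    (hQ : ∀ z a, QIS z a = rIS z a + γ * ∑ z', PIS z a z' * VIS z')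
    (hV : ∀ z a, QIS z a ≤ VIS z) :
    valJ γ ν P r π ≤ ∑ x, ν x * VIS (σ [] x.2) := by
  have hγ : |γ| < 1 := (abs_of_nonneg hγ0).trans_lt hγ1
  have hR := summable_pow_mul_expRtime hγ hν hP hπ r
  have hW := summable_pow_mul_stageExp_comp hγ hν hP hπ VIS fun past u _ => σ past u.1
  calc valJ γ ν P r π
      ≤ γ ^ 0 * stageExp ν P π 0 fun past u _ => VIS (σ past u.1) := by
        refine tsum_le_of_add_succ_le hR hW.tendsto_atTop_zero fun t => ?_
        rw [h.discounted_expRtime_add_value hπ hQ]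
        exact mul_le_mul_of_nonneg_left
          (stageExp_mono hν hP hπ (fun past u _ => hV (σ past u.1) u.2) t) (pow_nonneg hγ0 t)
    _ = ∑ x, ν x * VIS (σ [] x.2) := by
        rw [pow_zero, one_mul, stageExp_zero_of_obs hπ fun past y => VIS (σ past y)]

theorem valJ_eq_initial_value_of_greedy (h : IsInformationState ν P r σ rIS PIS π) (hγ : |γ| < 1)
    (hν : ν ∈ stdSimplex ℝ (S × Y)) (hP : ∀ s a, P s a ∈ stdSimplex ℝ (S × Y)) (hπ : validPol π)
    (hQ : ∀ z a, QIS z a = rIS z a + γ * ∑ z', PIS z a z' * VIS z')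
    (hgreedy : ∀ past y a, π past y a ≠ 0 → QIS (σ past y) a = VIS (σ past y)) :
    valJ γ ν P r π = ∑ x, ν x * VIS (σ [] x.2) := by
  have hR := summable_pow_mul_expRtime hγ hν hP hπ r
  have hW := summable_pow_mul_stageExp_comp hγ hν hP hπ VIS fun past u _ => σ past u.1
  calc valJ γ ν P r π
      = γ ^ 0 * stageExp ν P π 0 fun past u _ => VIS (σ past u.1) := by
        refine tsum_eq_of_add_succ_eq hR hW.tendsto_atTop_zero fun t => ?_
        rw [h.discounted_expRtime_add_value hπ hQ, stageExp_congr_of_policy_ne_zero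
          (fun past u hu => funext fun _ => hgreedy past u.1 u.2 hu)]
    _ = ∑ x, ν x * VIS (σ [] x.2) := by
        rw [pow_zero, one_mul, stageExp_zero_of_obs hπ fun past y => VIS (σ past y)]

end IsInformationState

theorem stmt_13_general [Fintype A] [Fintype Z] [DecidableEq A] (hγ0 : 0 ≤ γ) (hγ1 : γ < 1)
    (hν : ν ∈ stdSimplex ℝ (S × Y)) (hP : ∀ s a, P s a ∈ stdSimplex ℝ (S × Y))
    (hIS : ∀ π, validPol π → IsInformationState ν P r σ rIS PIS π)
    (hQ : ∀ z a, QIS z a = rIS z a + γ * ∑ z', PIS z a z' * VIS z')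
    (hV : ∀ z a, QIS z a ≤ VIS z) {g : Z → A} (hg : ∀ z, QIS z (g z) = VIS z) :
    IsGreatest (Set.range fun π : {π : List (Y × A) → Y → A → ℝ // validPol π} =>
        valJ γ ν P r π.1)
      (valJ γ ν P r fun past y a => if a = g (σ past y) then 1 else 0) := by
  have hγ : |γ| < 1 := (abs_of_nonneg hγ0).trans_lt hγ1
  have hg_valid := validPol_deterministic fun past y => g (σ past y)
  refine ⟨⟨⟨_, hg_valid⟩, rfl⟩, ?_⟩
  have hg_value := (hIS _ hg_valid).valJ_eq_initial_value_of_greedy hγ hν hP hg_valid hQ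
    fun past y a ha => by rw [(ite_ne_right_iff.1 ha).1, hg]
  rintro _ ⟨⟨π, hπ⟩, rfl⟩
  exact ((hIS π hπ).valJ_le_initial_value hγ0 hγ1 hν hP hπ hQ hV).trans_eq hg_value.symm

end InformationState

section

variable {S A Y Z : Type*} [Fintype S] [Fintype A] [Fintype Y] [Fintype Z]

/-- **Information-state based dynamic program.** If the agent state is an information
state — (P1): sufficient for performance evaluation, and (P2): sufficient for predicting
itself (both stated via conditional probabilities under every valid policy) — then the
history-dependent policy obtained from a greedy solution of the agent-state Bellman
equations achieves the supremum of the expected discounted reward over all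
history-dependent policies. -/
theorem stmt_13 [DecidableEq A] [DecidableEq Z] [Nonempty A]
    (γ : ℝ) (hγ0 : 0 < γ) (hγ1 : γ < 1)
    (Rmax : ℝ) (r : S → A → ℝ) (hr : ∀ s a, r s a ∈ Set.Icc (0 : ℝ) Rmax)
    (ν : S × Y → ℝ) (hν0 : ∀ sy, 0 ≤ ν sy) (hν1 : ∑ sy : S × Y, ν sy = 1)
    (P : S → A → S × Y → ℝ) (hP0 : ∀ s a sy, 0 ≤ P s a sy)
    (hP1 : ∀ s a, ∑ sy : S × Y, P s a sy = 1)
    (φ0 : Y → Z) (φ : Z → Y → A → Z)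
    (rIS : Z → A → ℝ) (PIS : Z → A → Z → ℝ)
    -- (P1): sufficient for performance evaluation
    (hIS1 : ∀ π : List (Y × A) → Y → A → ℝ, validPol π →
      ∀ (y : Y) (a : A) (past : List (Y × A)),
        0 < histProb ν P π ((y, a) :: past) →
        (∑ sv : Fin ((y, a) :: past).length → S,
            probTraj ν P π (zipSV ((y, a) :: past) sv) * r (sv ⟨0, by simp⟩) a) /
          histProb ν P π ((y, a) :: past) = rIS (sigAgg φ0 φ past y) a)
    -- (P2): sufficient for predicting itself
    (hIS2 : ∀ π : List (Y × A) → Y → A → ℝ, validPol π →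
      ∀ (y : Y) (a : A) (past : List (Y × A)) (z' : Z),
        0 < histProb ν P π ((y, a) :: past) →
        (∑ sv : Fin ((y, a) :: past).length → S, ∑ sy' : S × Y,
            probTraj ν P π (zipSV ((y, a) :: past) sv) * P (sv ⟨0, by simp⟩) a sy' *
              (if z' = φ (sigAgg φ0 φ past y) sy'.2 a then 1 else 0)) /
          histProb ν P π ((y, a) :: past) = PIS (sigAgg φ0 φ past y) a z')
    -- the agent-state Bellman equations and a greedy selector
    (QIS : Z → A → ℝ) (VIS : Z → ℝ)
    (hQ : ∀ z a, QIS z a = rIS z a + γ * ∑ z' : Z, PIS z a z' * VIS z')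
    (hV : ∀ z, VIS z = ⨆ a, QIS z a)
    (g : Z → A) (hg : ∀ z, QIS z (g z) = VIS z) :
    valJ γ ν P r (fun past y a => if a = g (sigAgg φ0 φ past y) then 1 else 0) =
      ⨆ π : {π : List (Y × A) → Y → A → ℝ // validPol π}, valJ γ ν P r π.1 := by
  have hν : ν ∈ stdSimplex ℝ (S × Y) := ⟨hν0, hν1⟩
  have hP (s a) : P s a ∈ stdSimplex ℝ (S × Y) := ⟨hP0 s a, hP1 s a⟩
  have hIS (π) (hπ : validPol π) :=
    IsInformationState.of_condExp hν hP hπ (σ := sigAgg φ0 φ) (hIS1 π hπ) (hIS2 π hπ)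
  have hV_ge (z a) : QIS z a ≤ VIS z := hV z ▸ le_ciSup (Set.finite_range (QIS z)).bddAbove a
  exact (stmt_13_general hγ0.le hγ1 hν hP hIS hQ hV_ge hg).csSup_eq.symm

end
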